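/- A countable hypergraph E in which any two distinct edges intersect in at most one point (i.e., |S ∩ T| ≤ 1 for distinct S, T ∈ E) has a minimal cover. -/

import Mathlib

/-- `C` is a cover of the hypergraph `E`. -/
def IsCover {α : Type*} (E C : Set (Set α)) : Prop :=
  C ⊆ E ∧ ⋃₀ C = ⋃₀ E

/-- `C` is a minimal cover of the hypergraph `E`. -/
def IsMinimalCover {α : Type*} (E C : Set (Set α)) : Prop :=
  IsCover E C ∧ ∀ D ⊆ C, IsCover E D → D = C

/-- `S` is a subhypergraph of `E`. -/
def IsSubhypergraph {α : Type*} (E S : Set (Set α)) : Prop :=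
  ∃ F ⊆ E, ∃ A ⊆ ⋃₀ F, S = (fun T => T ∩ A) '' F

/-- `S` has a maximal edge. -/
def HasMaximalEdge {α : Type*} (S : Set (Set α)) : Prop :=
  ∃ M ∈ S, ∀ T ∈ S, M ⊆ T → T = M

/-- `S` is isomorphic to the hypergraph ω, whose vertex set is ℕ and whose
edges are the initial segments `{0, …, n-1}` for `n : ℕ`. -/
def IsoToOmega {α : Type*} (S : Set (Set α)) : Prop :=
  ∃ f : ℕ → α, Function.Injective f ∧ Set.range f = ⋃₀ S ∧
    S = {T | ∃ n : ℕ, T = f '' Set.Iio n}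

/-!
A cover is minimal once each of its edges has a private vertex, so we choose edges one at a time,
reserving a witness in each that no later edge may contain. Countably many steps suffice to cover
the vertices lying in two or more edges, as long as each step leaves every uncovered vertex in some
edge free of witnesses. A vertex that is still uncovered at the end lies in a single edge, which
avoids all witnesses and can therefore be added.
-/

/-- The vertices of `E` lying in at least two edges. -/
def sharedVertices {α : Type*} (E : Set (Set α)) : Set α :=
  {v | {S ∈ E | v ∈ S}.Nontrivial}

/-- The edges of `E` that avoid `X`. When `X` consists of vertices reserved as private to edges
chosen earlier, these are the edges that may still be chosen. -/
def edgesAvoiding {α : Type*} (E : Set (Set α)) (X : Set α) : Set (Set α) :=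
  {S ∈ E | Disjoint S X}

/-- An approximation to a minimal cover of `E`: chosen edges, each containing a witness, where a
witness lies in at most one chosen edge and every vertex not yet covered lies in an edge free of
witnesses. As extensions keep the witnesses, they are ordered by inclusion of both components. -/
structure PartialCover {α : Type*} (E : Set (Set α)) where
  edges : Set (Set α)
  witnesses : Set α
  edges_subset : edges ⊆ E
  inter_witnesses_nonempty : ∀ S ∈ edges, (S ∩ witnesses).Nonempty
  eq_of_witness_mem : ∀ x ∈ witnesses, ∀ S ∈ edges, ∀ T ∈ edges, x ∈ S → x ∈ T → S = T
  sUnion_subset : ⋃₀ E ⊆ ⋃₀ (edges ∪ edgesAvoiding E witnesses)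

section

variable {α : Type*} {E : Set (Set α)}

theorem sharedVertices_subset_sUnion : sharedVertices E ⊆ ⋃₀ E := by
  rintro v ⟨S, hS, -⟩
  exact ⟨S, hS⟩

theorem eq_of_mem_of_notMem_sharedVertices {v : α} (hv : v ∉ sharedVertices E) {S T : Set α}
    (hS : S ∈ E) (hT : T ∈ E) (hvS : v ∈ S) (hvT : v ∈ T) : S = T :=
  Set.not_nontrivial_iff.1 hv ⟨hS, hvS⟩ ⟨hT, hvT⟩

theorem mem_edgesAvoiding_insert {S X : Set α} {x : α} (hS : S ∈ edgesAvoiding E X) (hx : x ∉ S) :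
    S ∈ edgesAvoiding E (insert x X) :=
  ⟨hS.1, Set.disjoint_insert_right.2 ⟨hx, hS.2⟩⟩

theorem IsCover.isMinimalCover {C : Set (Set α)} (hC : IsCover E C)
    (hpriv : ∀ S ∈ C, ∃ x ∈ S, ∀ T ∈ C, x ∈ T → T = S) : IsMinimalCover E C := by
  refine ⟨hC, fun D hDC hD => hDC.antisymm fun S hS => ?_⟩
  obtain ⟨x, hxS, hx⟩ := hpriv S hS
  have hxD : x ∈ ⋃₀ D := hD.2 ▸ ⟨S, hC.1 hS, hxS⟩
  obtain ⟨T, hTD, hxT⟩ := hxD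
  exact hx T (hDC hTD) hxT ▸ hTD

namespace PartialCover

instance : Preorder (PartialCover E) :=
  Preorder.lift fun p => (p.edges, p.witnesses)

instance : Inhabited (PartialCover E) where
  default :=
    { edges := ∅
      witnesses := ∅
      edges_subset := Set.empty_subset E
      inter_witnesses_nonempty := by simp
      eq_of_witness_mem := by simp
      sUnion_subset := by simp [edgesAvoiding] }

variable {v : α}

theorem exists_mem_edgesAvoiding (p : PartialCover E) (hv : v ∈ ⋃₀ E) (hvp : v ∉ ⋃₀ p.edges) :
    ∃ S ∈ edgesAvoiding E p.witnesses, v ∈ S := by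
  have hv' := p.sUnion_subset hv
  rw [Set.sUnion_union] at hv'
  exact hv'.resolve_left hvp

/-- The extension of a partial cover by the edge `M` with witness `x`. -/
def insertEdge (p : PartialCover E) (M : Set α) (x : α) (hM : M ∈ edgesAvoiding E p.witnesses)
    (hxM : x ∈ M) (hxp : x ∉ ⋃₀ p.edges)
    (hcov : ⋃₀ E ⊆ ⋃₀ (insert M p.edges ∪ edgesAvoiding E (insert x p.witnesses))) :
    PartialCover E where
  edges := insert M p.edges
  witnesses := insert x p.witnesses
  edges_subset := Set.insert_subset hM.1 p.edges_subset
  inter_witnesses_nonempty := by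
    rintro S (rfl | hS)
    · exact ⟨x, hxM, Set.mem_insert _ _⟩
    · exact (p.inter_witnesses_nonempty S hS).mono
        (Set.inter_subset_inter_right S (Set.subset_insert _ _))
  eq_of_witness_mem := by
    have hx : ∀ S ∈ p.edges, x ∉ S := fun S hS hxS => hxp ⟨S, hS, hxS⟩
    have hMw : ∀ z ∈ p.witnesses, z ∉ M := fun z hz hzM => Set.disjoint_left.1 hM.2 hzM hz
    rintro z (rfl | hz) S (rfl | hS) T (rfl | hT) hzS hzT
    · rfl
    · exact absurd hzT (hx T hT)
    · exact absurd hzS (hx S hS)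
    · exact absurd hzS (hx S hS)
    · rfl
    · exact absurd hzS (hMw z hz)
    · exact absurd hzT (hMw z hz)
    · exact p.eq_of_witness_mem z hz S hS T hT hzS hzT
  sUnion_subset := hcov

/-- Either any available edge through `v` can be chosen with witness `v`, or some uncovered vertex
`y` has all its available edges passing through `v`. In the latter case there is only one such
edge, as two of them would share both `v` and `y`, so choosing it with witness `y` blocks no
other edge. -/
theorem exists_insertable (hE : E.Pairwise fun S T => (S ∩ T).Subsingleton) (p : PartialCover E)
    (hv : v ∈ ⋃₀ E) (hvp : v ∉ ⋃₀ p.edges) :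
    ∃ M ∈ edgesAvoiding E p.witnesses, v ∈ M ∧ ∃ x ∈ M, x ∉ ⋃₀ p.edges ∧
      ⋃₀ E ⊆ ⋃₀ (insert M p.edges ∪ edgesAvoiding E (insert x p.witnesses)) := by
  obtain ⟨M, hM, hvM⟩ := p.exists_mem_edgesAvoiding hv hvp
  by_cases hcov : ⋃₀ E ⊆ ⋃₀ (insert M p.edges ∪ edgesAvoiding E (insert v p.witnesses))
  · exact ⟨M, hM, hvM, v, hvM, hvp, hcov⟩
  obtain ⟨y, hy, hy_blocked⟩ := Set.not_subset.1 hcov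
  rw [Set.sUnion_union, Set.sUnion_insert, Set.mem_union, Set.mem_union] at hy_blocked
  push Not at hy_blocked
  obtain ⟨⟨hyM, hyp⟩, hy_blocked⟩ := hy_blocked
  have hyv : y ≠ v := fun h => hyM (h ▸ hvM)
  have v_mem_of_y_mem : ∀ T ∈ edgesAvoiding E p.witnesses, y ∈ T → v ∈ T := fun T hT hyT =>
    by_contra fun hvT => hy_blocked ⟨T, mem_edgesAvoiding_insert hT hvT, hyT⟩
  obtain ⟨N, hN, hyN⟩ := p.exists_mem_edgesAvoiding hy hyp
  have hvN : v ∈ N := v_mem_of_y_mem N hN hyN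
  have eq_N : ∀ T ∈ edgesAvoiding E p.witnesses, y ∈ T → T = N := fun T hT hyT =>
    by_contra fun hTN =>
      hyv (hE hT.1 hN.1 hTN ⟨hyT, hyN⟩ ⟨v_mem_of_y_mem T hT hyT, hvN⟩)
  refine ⟨N, hN, hvN, y, hyN, hyp, fun w hw => ?_⟩
  obtain ⟨T, hT | hT, hwT⟩ := p.sUnion_subset hw
  · exact ⟨T, Or.inl (Set.mem_insert_of_mem N hT), hwT⟩
  by_cases hyT : y ∈ T
  · exact ⟨N, Or.inl (Set.mem_insert N p.edges), eq_N T hT hyT ▸ hwT⟩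
  · exact ⟨T, Or.inr (mem_edgesAvoiding_insert hT hyT), hwT⟩

theorem exists_ge_mem_sUnion (hE : E.Pairwise fun S T => (S ∩ T).Subsingleton)
    (p : PartialCover E) (hv : v ∈ ⋃₀ E) : ∃ q, p ≤ q ∧ v ∈ ⋃₀ q.edges := by
  by_cases hvp : v ∈ ⋃₀ p.edges
  · exact ⟨p, le_rfl, hvp⟩
  obtain ⟨M, hM, hvM, x, hxM, hxp, hcov⟩ := p.exists_insertable hE hv hvp
  exact ⟨p.insertEdge M x hM hxM hxp hcov,
    ⟨Set.subset_insert M p.edges, Set.subset_insert x p.witnesses⟩,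
    M, Set.mem_insert M p.edges, hvM⟩

/-- The partial covers covering the vertex `v`, as a cofinal set. -/
def cofinalCovering (hE : E.Pairwise fun S T => (S ∩ T).Subsingleton) (hv : v ∈ ⋃₀ E) :
    Order.Cofinal (PartialCover E) where
  carrier := {p | v ∈ ⋃₀ p.edges}
  isCofinal p := by
    obtain ⟨q, hpq, hvq⟩ := p.exists_ge_mem_sUnion hE hv
    exact ⟨q, hvq, hpq⟩

/-- The union of a directed set of partial covers. A vertex that stays uncovered might see each of
its edges blocked by some member; this cannot happen to a vertex lying in a single edge. -/
def directedUnion (I : Set (PartialCover E)) (hI : DirectedOn (· ≤ ·) I)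
    (hcov : sharedVertices E ⊆ ⋃ p ∈ I, ⋃₀ p.edges) : PartialCover E where
  edges := ⋃ p ∈ I, p.edges
  witnesses := ⋃ p ∈ I, p.witnesses
  edges_subset := Set.iUnion₂_subset fun p _ => p.edges_subset
  inter_witnesses_nonempty S hS := by
    obtain ⟨p, hp, hSp⟩ := Set.mem_iUnion₂.1 hS
    exact (p.inter_witnesses_nonempty S hSp).mono
      (Set.inter_subset_inter_right S (Set.subset_biUnion_of_mem hp))
  eq_of_witness_mem x hx S hS T hT hxS hxT := by
    obtain ⟨p, hp, hxp⟩ := Set.mem_iUnion₂.1 hx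
    obtain ⟨q, hq, hSq⟩ := Set.mem_iUnion₂.1 hS
    obtain ⟨r, hr, hTr⟩ := Set.mem_iUnion₂.1 hT
    obtain ⟨s, hs, hps, hqs⟩ := hI p hp q hq
    obtain ⟨t, -, hst, hrt⟩ := hI s hs r hr
    exact t.eq_of_witness_mem x (hst.2 (hps.2 hxp)) S (hst.1 (hqs.1 hSq)) T (hrt.1 hTr) hxS hxT
  sUnion_subset := by
    rintro y ⟨T, hT, hyT⟩
    rw [Set.sUnion_union]
    refine or_iff_not_imp_left.2 fun hy => ⟨T, ⟨hT, ?_⟩, hyT⟩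
    have hyp : ∀ p ∈ I, y ∉ ⋃₀ p.edges := fun p hp ⟨S, hS, hyS⟩ =>
      hy ⟨S, Set.mem_biUnion hp hS, hyS⟩
    have hy_single : y ∉ sharedVertices E := fun hy' => by
      obtain ⟨p, hp, hyp'⟩ := Set.mem_iUnion₂.1 (hcov hy')
      exact hyp p hp hyp'
    refine Set.disjoint_iUnion₂_right.2 fun p hp => ?_
    obtain ⟨S, hS, hyS⟩ := p.exists_mem_edgesAvoiding ⟨T, hT, hyT⟩ (hyp p hp)
    exact eq_of_mem_of_notMem_sharedVertices hy_single hS.1 hT hyS hyT ▸ hS.2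

theorem exists_sharedVertices_subset (hE : E.Pairwise fun S T => (S ∩ T).Subsingleton)
    (hc : (sharedVertices E).Countable) :
    ∃ p : PartialCover E, sharedVertices E ⊆ ⋃₀ p.edges := by
  have := hc.toEncodable
  let 𝒟 (v : sharedVertices E) : Order.Cofinal (PartialCover E) :=
    cofinalCovering hE (sharedVertices_subset_sUnion v.2)
  let I := Order.idealOfCofinals default 𝒟
  have hcov : sharedVertices E ⊆ ⋃ p ∈ (I : Set (PartialCover E)), ⋃₀ p.edges := fun v hv => by
    obtain ⟨p, hvp, hp⟩ := Order.cofinal_meets_idealOfCofinals default 𝒟 ⟨v, hv⟩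
    exact Set.mem_biUnion hp hvp
  refine ⟨directedUnion I I.directed hcov, fun v hv => ?_⟩
  obtain ⟨p, hp, S, hS, hvS⟩ := Set.mem_iUnion₂.1 (hcov hv)
  exact ⟨S, Set.mem_biUnion hp hS, hvS⟩

theorem isMinimalCover_union (p : PartialCover E) (hp : sharedVertices E ⊆ ⋃₀ p.edges) :
    IsMinimalCover E (p.edges ∪ {S ∈ E | ¬S ⊆ ⋃₀ p.edges}) := by
  have hsub : p.edges ∪ {S ∈ E | ¬S ⊆ ⋃₀ p.edges} ⊆ E :=
    Set.union_subset p.edges_subset (Set.sep_subset _ _)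
  have hcover : IsCover E (p.edges ∪ {S ∈ E | ¬S ⊆ ⋃₀ p.edges}) := by
    refine ⟨hsub, (Set.sUnion_subset_sUnion hsub).antisymm ?_⟩
    rintro v ⟨S, hS, hvS⟩
    rw [Set.sUnion_union]
    exact or_iff_not_imp_left.2 fun hv => ⟨S, ⟨hS, fun h => hv (h hvS)⟩, hvS⟩
  refine hcover.isMinimalCover ?_
  rintro S (hS | ⟨hS, hSp⟩)
  · obtain ⟨x, hxS, hx⟩ := p.inter_witnesses_nonempty S hS
    refine ⟨x, hxS, ?_⟩
    rintro T (hT | ⟨hT, hTp⟩) hxT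
    · exact p.eq_of_witness_mem x hx T hT S hS hxT hxS
    · obtain ⟨y, hyT, hy⟩ := Set.not_subset.1 hTp
      obtain ⟨U, hU, hyU⟩ := p.exists_mem_edgesAvoiding ⟨T, hT, hyT⟩ hy
      have hUT : U = T := eq_of_mem_of_notMem_sharedVertices (fun h => hy (hp h)) hU.1 hT hyU hyT
      exact absurd hx (Set.disjoint_left.1 hU.2 (hUT ▸ hxT))
  · obtain ⟨y, hyS, hy⟩ := Set.not_subset.1 hSp
    exact ⟨y, hyS, fun T hT hyT =>
      eq_of_mem_of_notMem_sharedVertices (fun h => hy (hp h)) (hsub hT) hS hyT hyS⟩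

end PartialCover

theorem stmt_8_general (hE : E.Pairwise fun S T => (S ∩ T).Subsingleton)
    (hc : (sharedVertices E).Countable) : ∃ C, IsMinimalCover E C := by
  obtain ⟨p, hp⟩ := PartialCover.exists_sharedVertices_subset hE hc
  exact ⟨_, p.isMinimalCover_union hp⟩

end

theorem stmt_8 {α : Type*} (E : Set (Set α))
    (hEc : E.Countable) (hVc : (⋃₀ E).Countable)
    (h : ∀ S ∈ E, ∀ T ∈ E, S ≠ T → (S ∩ T).Subsingleton) :
    ∃ C, IsMinimalCover E C :=
  stmt_8_general (fun S hS T hT => h S hS T hT) (hVc.mono sharedVertices_subset_sUnion)
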